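/- arXiv:1707.02646 — 2 statements merged into one kernel-verified Lean document; each statement's English description precedes it below -/
import Mathlib

section
/- Fix an integer m ≥ 1 and vectors u₁, …, u_s ∈ ℤⁿ that span ℝⁿ over ℝ, and let S be the submonoid of ℤⁿ generated by u₁, …, u_s. Then there exists a positive integer c₀ such that for every a ∈ ℤⁿ with ⟨a, u⟩ ≥ 0 for all u ∈ S, there exists b ∈ ℤⁿ with ⟨b, u⟩ ≥ 0 for all u ∈ S satisfying: (i) the set {uᵢ : ⟨b, uᵢ⟩ ≤ m + c₀} spans ℝⁿ over ℝ; and (ii) for every u ∈ S, ⟨a, u⟩ ≤ m if and only if ⟨b, u⟩ ≤ m, and ⟨a, u⟩ = ⟨b, u⟩ whenever ⟨a, u⟩ ≤ m. -/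
/-!
Only the values `⟨a, uᵢ⟩` truncated at `m + 1` matter: for functionals that are nonnegative on the
generators, they determine the truncated values on all of `S`, because truncation is compatible
with sums of nonnegative numbers. There are finitely many patterns of truncated values, so replacing
each `a` by a fixed representative of its pattern bounds the values on *all* generators uniformly.
-/

theorem exists_forall_exists_eq_and_le_of_finite_range {α β γ : Type*} [Preorder γ]
    [IsDirectedOrder γ] [Nonempty γ] {f : α → β} (hf : (Set.range f).Finite) (g : α → γ) :
    ∃ C, ∀ a, ∃ b, f b = f a ∧ g b ≤ C := by
  have := hf.to_subtype
  obtain ⟨C, hC⟩ := (Set.finite_range (g ∘ Set.rangeSplitting f)).bddAbove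
  exact ⟨C, fun a => ⟨Set.rangeSplitting f ⟨f a, a, rfl⟩,
    Set.apply_rangeSplitting f _, hC ⟨_, rfl⟩⟩⟩

theorem min_eq_min_iff_lt_iff_lt_and_eq {N : Type*} [LinearOrder N] {x y k : N} :
    min x k = min y k ↔ (x < k ↔ y < k) ∧ (x < k → x = y) := by
  grind

theorem map_nonneg_of_mem_closure {M N : Type*} [AddMonoid M] [AddCommMonoid N] [Preorder N]
    [IsOrderedAddMonoid N] {t : Set M} {φ : M →+ N} (hφ : ∀ x ∈ t, 0 ≤ φ x) {w : M}
    (hw : w ∈ AddSubmonoid.closure t) : 0 ≤ φ w :=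
  (AddSubmonoid.closure_le (S := (AddSubmonoid.nonneg N).comap φ)).2 hφ hw

section TruncatedValues

variable {N : Type*} [AddCommMonoid N] [LinearOrder N] [IsOrderedAddMonoid N]

theorem min_add_eq_min_min_add_min {x y k : N} (hx : 0 ≤ x) (hy : 0 ≤ y) (hk : 0 ≤ k) :
    min (x + y) k = min (min x k + min y k) k := by
  rcases le_total k x with hkx | hxk
  · rw [min_eq_right (le_add_of_le_of_nonneg hkx hy), min_eq_right hkx,
      min_eq_right (le_add_of_nonneg_right (le_min hy hk))]
  rcases le_total k y with hky | hyk
  · rw [min_eq_right (le_add_of_nonneg_of_le hx hky), min_eq_right hky,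
      min_eq_right (le_add_of_nonneg_left (le_min hx hk))]
  · rw [min_eq_left hxk, min_eq_left hyk]

theorem min_map_eq_min_map_of_mem_closure {M : Type*} [AddMonoid M] {t : Set M}
    {φ ψ : M →+ N} {k : N} (hk : 0 ≤ k)
    (hφ : ∀ x ∈ t, 0 ≤ φ x) (hψ : ∀ x ∈ t, 0 ≤ ψ x) (h : ∀ x ∈ t, min (φ x) k = min (ψ x) k)
    {w : M} (hw : w ∈ AddSubmonoid.closure t) : min (φ w) k = min (ψ w) k := by
  induction hw using AddSubmonoid.closure_induction with
  | mem x hx => exact h x hx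
  | zero => simp only [map_zero]
  | add x y hx hy ihx ihy =>
    rw [map_add, map_add,
      min_add_eq_min_min_add_min (map_nonneg_of_mem_closure hφ hx)
        (map_nonneg_of_mem_closure hφ hy) hk,
      min_add_eq_min_min_add_min (map_nonneg_of_mem_closure hψ hx)
        (map_nonneg_of_mem_closure hψ hy) hk, ihx, ihy]

end TruncatedValues

theorem finite_range_min_of_nonneg {α ι N : Type*} [Finite ι] [LinearOrder N] [Zero N]
    [LocallyFiniteOrder N] {v : α → ι → N} (hv : ∀ a i, 0 ≤ v a i) {k : N} (hk : 0 ≤ k) :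
    (Set.range fun a i => min (v a i) k).Finite := by
  classical
  cases nonempty_fintype ι
  refine (Set.finite_Icc (0 : ι → N) fun _ => k).subset ?_
  rintro _ ⟨a, rfl⟩
  exact ⟨fun i => le_min (hv a i) hk, fun i => min_le_right _ _⟩

theorem stmt3_general {α ι M : Type*} [Finite ι] [AddMonoid M] (Φ : α → M →+ ℤ) (u : ι → M)
    (m : ℕ) :
    ∃ c₀ : ℕ, ∀ a, (∀ i, 0 ≤ Φ a (u i)) → ∃ b, (∀ i, Φ b (u i) ≤ c₀) ∧
      ∀ w ∈ AddSubmonoid.closure (Set.range u),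
        0 ≤ Φ b w ∧ (Φ a w ≤ m ↔ Φ b w ≤ m) ∧ (Φ a w ≤ m → Φ a w = Φ b w) := by
  cases nonempty_fintype ι
  let v (a : {a // ∀ i, 0 ≤ Φ a (u i)}) (i : ι) : ℤ := Φ a (u i)
  have hk : (0 : ℤ) ≤ m + 1 := by positivity
  obtain ⟨c₀, hc₀⟩ := exists_forall_exists_eq_and_le_of_finite_range
    (finite_range_min_of_nonneg (v := v) (fun a => a.2) hk)
    fun a => Finset.univ.sup fun i => (v a i).toNat
  refine ⟨c₀, fun a ha => ?_⟩
  obtain ⟨⟨b, hb⟩, hpattern, hbound⟩ := hc₀ ⟨a, ha⟩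
  have ha' : ∀ x ∈ Set.range u, 0 ≤ Φ a x := Set.forall_mem_range.2 ha
  have hb' : ∀ x ∈ Set.range u, 0 ≤ Φ b x := Set.forall_mem_range.2 hb
  refine ⟨b, fun i => Int.toNat_le.1 (Finset.sup_le_iff.1 hbound i (Finset.mem_univ i)),
    fun w hw => ⟨map_nonneg_of_mem_closure hb' hw, ?_⟩⟩
  have htrunc : min (Φ a w) (m + 1) = min (Φ b w) (m + 1) :=
    min_map_eq_min_map_of_mem_closure hk ha' hb'
      (Set.forall_mem_range.2 fun i => (congrFun hpattern i).symm) hw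
  simpa only [Int.lt_add_one_iff] using min_eq_min_iff_lt_iff_lt_and_eq.1 htrunc

theorem stmt3 (m n s : ℕ) (hm : 1 ≤ m) (u : Fin s → Fin n → ℤ)
    (hspan : Submodule.span ℝ (Set.range fun i => fun j => (u i j : ℝ)) = ⊤) :
    ∃ c₀ : ℕ, 0 < c₀ ∧
      ∀ a : Fin n → ℤ,
        (∀ w ∈ AddSubmonoid.closure (Set.range u), 0 ≤ ∑ j, a j * w j) →
        ∃ b : Fin n → ℤ,
          (∀ w ∈ AddSubmonoid.closure (Set.range u), 0 ≤ ∑ j, b j * w j) ∧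
          Submodule.span ℝ
            {x : Fin n → ℝ | ∃ i, (∑ j, b j * u i j) ≤ (m : ℤ) + (c₀ : ℤ) ∧
              x = fun j => (u i j : ℝ)} = ⊤ ∧
          ∀ w ∈ AddSubmonoid.closure (Set.range u),
            ((∑ j, a j * w j) ≤ (m : ℤ) ↔ (∑ j, b j * w j) ≤ (m : ℤ)) ∧
            ((∑ j, a j * w j) ≤ (m : ℤ) → (∑ j, a j * w j) = ∑ j, b j * w j) := by
  obtain ⟨c₀, hc₀⟩ := stmt3_general (fun a => (dotProductBilin ℤ ℤ a).toAddMonoidHom) u m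
  refine ⟨c₀ + 1, c₀.succ_pos, fun a ha => ?_⟩
  obtain ⟨b, hbound, hb⟩ := hc₀ a fun i => ha _ (AddSubmonoid.subset_closure ⟨i, rfl⟩)
  have hle (i : Fin s) : ∑ j, b j * u i j ≤ (m : ℤ) + ((c₀ + 1 : ℕ) : ℤ) :=
    (hbound i).trans (by omega)
  refine ⟨b, fun w hw => (hb w hw).1, ?_, fun w hw => (hb w hw).2⟩
  simpa only [hle, true_and, eq_comm, Set.range] using hspan
end

section
/- Fix an integer n ≥ 0 and pairwise distinct exponent vectors I¹, …, I^N ∈ ℕ^{n+1} with N ≥ 1. Then there exists a nonzero polynomial g ∈ ℂ[a₁, …, a_N] such that for every tuple (a₁, …, a_N) ∈ ℂ^N with aᵢ ≠ 0 for all i and g(a₁, …, a_N) ≠ 0, the polynomial P = Σ_{i=1}^{N} aᵢ x^{Iⁱ} ∈ ℂ[x₁, …, x_{n+1}] has no common zero with all of its partial derivatives in the algebraic torus: there is no point z ∈ ℂ^{n+1} with zⱼ ≠ 0 for all j, P(z) = 0, and (∂P/∂xⱼ)(z) = 0 for all j = 1, …, n+1. -/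
/-!
This is Bertini's theorem for the linear system spanned by the monomials, whose base locus misses
the torus. Suppose `Σ aᵢ fᵢ` is singular at `z`, with `a` and `z` taken in a field extension `L` of
`K`. A `K`-derivation `D` of `L` sends `Σ aᵢ fᵢ(z) = 0` to
`Σ D(aᵢ) fᵢ(z) + Σⱼ (Σ aᵢ ∂ⱼfᵢ(z)) D(zⱼ) = Σ D(aᵢ) fᵢ(z)`, so this last sum vanishes. If the `aᵢ`
were algebraically independent over `K`, then in characteristic zero the values `D(aᵢ)` could be
prescribed arbitrarily, and every `fₖ(z)` would vanish. Hence, on the incidence variety of pairs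
`(a, z)`, each `fₖ` vanishes wherever the coefficients are generic.
-/

open MvPolynomial

section ExtensionOfDerivations

open KaehlerDifferential in
theorem exists_derivation_algebraMap_eq_of_formallyEtale {R S T M : Type*} [CommRing R]
    [CommRing S] [CommRing T] [Algebra R S] [Algebra R T] [Algebra S T] [IsScalarTower R S T]
    [Algebra.FormallyEtale S T] [AddCommGroup M] [Module R M] [Module S M] [Module T M]
    [IsScalarTower R S M] [IsScalarTower R T M] [IsScalarTower S T M] (d : Derivation R S M) :
    ∃ D : Derivation R T M, ∀ s, D (algebraMap S T s) = d s := by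
  have baseChange := isBaseChange_of_formallyEtale R S T
  refine ⟨(baseChange.lift d.liftKaehlerDifferential).compDer (KaehlerDifferential.D R T),
    fun s ↦ ?_⟩
  calc baseChange.lift d.liftKaehlerDifferential (KaehlerDifferential.D R T (algebraMap S T s))
      = baseChange.lift d.liftKaehlerDifferential
          (map R R S T (KaehlerDifferential.D R S s)) := by rw [map_D]
    _ = d s := by rw [baseChange.lift_eq, d.liftKaehlerDifferential_comp_D]

theorem formallyEtale_of_isAlgebraic_of_charZero (A L : Type*) [CommRing A] [IsDomain A]
    [CharZero A] [Field L] [Algebra A L] [FaithfulSMul A L] [Algebra.IsAlgebraic A L] :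
    Algebra.FormallyEtale A L := by
  let F := FractionRing A
  let : Algebra F L := FractionRing.liftAlgebra A L
  have : IsScalarTower A F L := FractionRing.isScalarTower_liftAlgebra A L
  have : CharZero F := charZero_of_injective_algebraMap (IsFractionRing.injective A F)
  have : Algebra.IsAlgebraic F L := Algebra.IsAlgebraic.extendScalars (IsFractionRing.injective A F)
  have : Algebra.FormallyEtale A F := .of_isLocalization (nonZeroDivisors A)
  have : Algebra.FormallyEtale F L := .of_isSeparable F L
  exact .comp A F L

variable {K L ι : Type*} [Field K] [Field L] [Algebra K L]

theorem exists_derivation_eq_of_isTranscendenceBasis [CharZero K] {x : ι → L}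
    (hx : IsTranscendenceBasis K x) (y : ι → L) :
    ∃ D : Derivation K L L, ∀ i, D (x i) = y i := by
  let : Algebra (MvPolynomial ι K) L := (aeval x).toAlgebra
  have : IsScalarTower K (MvPolynomial ι K) L := .of_algebraMap_eq' (aeval x).comp_algebraMap.symm
  have : FaithfulSMul (MvPolynomial ι K) L := (faithfulSMul_iff_algebraMap_injective _ _).2 hx.1
  have : Algebra.IsAlgebraic (MvPolynomial ι K) L := by
    have := hx.isAlgebraic
    exact .of_ringHom_of_comp_eq hx.1.aevalEquiv (RingHom.id L) hx.1.aevalEquiv.surjective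
      Function.injective_id (RingHom.ext fun p ↦ hx.1.algebraMap_aevalEquiv p)
  have := formallyEtale_of_isAlgebraic_of_charZero (MvPolynomial ι K) L
  obtain ⟨D, hD⟩ := exists_derivation_algebraMap_eq_of_formallyEtale (T := L) (mkDerivation K y)
  refine ⟨D, fun i ↦ ?_⟩
  calc D (x i) = D (algebraMap (MvPolynomial ι K) L (X i)) := by
        rw [RingHom.algebraMap_toAlgebra]; simp
    _ = y i := by rw [hD, mkDerivation_X]

theorem exists_derivation_eq_of_algebraicIndependent [CharZero K] {x : ι → L}
    (hx : AlgebraicIndependent K x) (y : ι → L) :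
    ∃ D : Derivation K L L, ∀ i, D (x i) = y i := by
  obtain ⟨s, hxs, hs⟩ := exists_isTranscendenceBasis_superset hx.coe_range
  obtain ⟨D, hD⟩ := exists_derivation_eq_of_isTranscendenceBasis hs
    fun b ↦ Function.extend x y 0 b
  exact ⟨D, fun i ↦ (hD ⟨x i, hxs ⟨i, rfl⟩⟩).trans (hx.injective.extend_apply y 0 i)⟩

end ExtensionOfDerivations

section ChainRule

open KaehlerDifferential

variable {R A σ : Type*} [CommRing R] [CommRing A] [Algebra R A] (D : Derivation R A A) (z : σ → A)

theorem derivation_aeval_eq_sum_mvPolynomialBasis_repr (f : MvPolynomial σ R) :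
    D (aeval z f) = ((mvPolynomialBasis R σ).repr (KaehlerDifferential.D R _ f)).sum
      fun j q ↦ aeval z q * D (z j) := by
  classical
  induction f using MvPolynomial.induction_on with
  | C c => simp [← algebraMap_eq]
  | add p q hp hq =>
    simp only [map_add, hp, hq]
    rw [Finsupp.sum_add_index' (by simp) (by simp [add_mul])]
  | mul_X p i hp =>
    have repr_D_mul_X : (mvPolynomialBasis R σ).repr (KaehlerDifferential.D R _ (p * X i)) =
        Finsupp.single i p + (X i : MvPolynomial σ R) •
          (mvPolynomialBasis R σ).repr (KaehlerDifferential.D R _ p) := by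
      simp [Finsupp.smul_single]
    rw [repr_D_mul_X, Finsupp.sum_add_index' (by simp) (by simp [add_mul]),
      Finsupp.sum_single_index (by simp), Finsupp.sum_smul_index' (by simp)]
    simp [hp, Finsupp.mul_sum, mul_assoc]

theorem derivation_aeval_eq_sum_pderiv {f : MvPolynomial σ R} {s : Finset σ} (hs : f.vars ⊆ s) :
    D (aeval z f) = ∑ j ∈ s, aeval z (pderiv j f) * D (z j) := by
  have hsupport : ((mvPolynomialBasis R σ).repr (KaehlerDifferential.D R _ f)).support ⊆ s :=
    fun j hj ↦ hs <| by
      contrapose! hj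
      simp [pderiv_eq_zero_of_notMem_vars hj]
  rw [derivation_aeval_eq_sum_mvPolynomialBasis_repr,
    Finsupp.sum_of_support_subset _ hsupport _ (by simp)]
  simp only [mvPolynomialBasis_repr_apply]

end ChainRule

section SingularIncidence

variable {R ι σ : Type*} [CommRing R] [Fintype ι]

/-- The member `∑ i, aᵢ fᵢ` of the linear system spanned by `f` whose coefficients `aᵢ` are
indeterminates, as a polynomial in the variables `aᵢ` (indexed by `Sum.inl`) and `xⱼ` (indexed by
`Sum.inr`). -/
noncomputable def genericMember (f : ι → MvPolynomial σ R) : MvPolynomial (ι ⊕ σ) R :=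
  ∑ i, X (Sum.inl i) * rename Sum.inr (f i)

theorem aeval_genericMember {A : Type*} [CommRing A] [Algebra R A] (f : ι → MvPolynomial σ R)
    (p : ι ⊕ σ → A) :
    aeval p (genericMember f) = ∑ i, p (Sum.inl i) * aeval (p ∘ Sum.inr) (f i) := by
  simp [genericMember, aeval_rename]

/-- The ideal of the incidence variety of pairs `(a, z)` such that `∑ i, aᵢ fᵢ` is singular
at `z`. -/
noncomputable def singularIncidenceIdeal (f : ι → MvPolynomial σ R) :
    Ideal (MvPolynomial (ι ⊕ σ) R) :=
  Ideal.span (insert (genericMember f) (Set.range fun j ↦ genericMember fun i ↦ pderiv j (f i)))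

theorem singularIncidenceIdeal_le_ker_aeval_iff {A : Type*} [CommRing A] [Algebra R A]
    {f : ι → MvPolynomial σ R} {p : ι ⊕ σ → A} :
    singularIncidenceIdeal f ≤ RingHom.ker (aeval (R := R) p) ↔
      ∑ i, p (Sum.inl i) * aeval (p ∘ Sum.inr) (f i) = 0 ∧
        ∀ j, ∑ i, p (Sum.inl i) * aeval (p ∘ Sum.inr) (pderiv j (f i)) = 0 := by
  simp [singularIncidenceIdeal, Ideal.span_le, Set.insert_subset_iff, Set.range_subset_iff,
    aeval_genericMember]

end SingularIncidence

section LinearSystem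

variable {K ι σ : Type*} [Field K] [CharZero K] [Fintype ι]

theorem aeval_eq_zero_of_singular_of_algebraicIndependent {L : Type*} [Field L]
    [Algebra K L] {f : ι → MvPolynomial σ K} {a : ι → L} {z : σ → L}
    (ha : AlgebraicIndependent K a) (hzero : ∑ i, a i * aeval z (f i) = 0)
    (hpderiv : ∀ j, ∑ i, a i * aeval z (pderiv j (f i)) = 0) (k : ι) :
    aeval z (f k) = 0 := by
  classical
  obtain ⟨D, hD⟩ := exists_derivation_eq_of_algebraicIndependent ha (Pi.single k 1)
  let s : Finset σ := Finset.univ.biUnion fun i ↦ (f i).vars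
  have hs (i : ι) : (f i).vars ⊆ s :=
    Finset.subset_biUnion_of_mem (fun i ↦ (f i).vars) (Finset.mem_univ i)
  have moving_point : ∑ i, a i * D (aeval z (f i)) = 0 := by
    calc ∑ i, a i * D (aeval z (f i))
        = ∑ j ∈ s, (∑ i, a i * aeval z (pderiv j (f i))) * D (z j) := by
          simp only [fun i ↦ derivation_aeval_eq_sum_pderiv D z (hs i), Finset.mul_sum,
            Finset.sum_mul, mul_assoc]
          exact Finset.sum_comm
      _ = 0 := by simp only [hpderiv, zero_mul, Finset.sum_const_zero]
  calc aeval z (f k) = ∑ i, aeval z (f i) * D (a i) := by simp [hD, Pi.single_apply]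
    _ = D (∑ i, a i * aeval z (f i)) := by
      simp only [map_sum, Derivation.leibniz, smul_eq_mul, Finset.sum_add_distrib, moving_point,
        zero_add]
    _ = 0 := by rw [hzero, map_zero]

theorem rename_inr_mem_of_singularIncidenceIdeal_le {f : ι → MvPolynomial σ K}
    {𝔭 : Ideal (MvPolynomial (ι ⊕ σ) K)} [𝔭.IsPrime]
    (hle : singularIncidenceIdeal f ≤ 𝔭)
    (hgeneric : ∀ g : MvPolynomial ι K, rename Sum.inl g ∈ 𝔭 → g = 0) (k : ι) :
    rename Sum.inr (f k) ∈ 𝔭 := by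
  let p : ι ⊕ σ → 𝔭.ResidueField := fun v ↦ algebraMap _ _ (X v : MvPolynomial (ι ⊕ σ) K)
  have aeval_p (h : MvPolynomial (ι ⊕ σ) K) : aeval p h = algebraMap _ 𝔭.ResidueField h :=
    (AlgHom.congr_fun (aeval_unique (Algebra.algHom K _ 𝔭.ResidueField)) h).symm
  have hindep : AlgebraicIndependent K (p ∘ Sum.inl) := by
    rw [algebraicIndependent_iff]
    intro g hg
    rw [← aeval_rename, aeval_p, Ideal.algebraMap_residueField_eq_zero] at hg
    exact hgeneric g hg
  have hker : singularIncidenceIdeal f ≤ RingHom.ker (aeval (R := K) p) := fun h hh ↦ by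
    rw [RingHom.mem_ker, aeval_p, Ideal.algebraMap_residueField_eq_zero]
    exact hle hh
  obtain ⟨hzero, hpderiv⟩ := singularIncidenceIdeal_le_ker_aeval_iff.1 hker
  rw [← Ideal.algebraMap_residueField_eq_zero, ← aeval_p, aeval_rename]
  exact aeval_eq_zero_of_singular_of_algebraicIndependent hindep hzero hpderiv k

theorem exists_rename_inl_mul_pow_mem_singularIncidenceIdeal (f : ι → MvPolynomial σ K)
    (k : ι) :
    ∃ g : MvPolynomial ι K, g ≠ 0 ∧
      ∃ m : ℕ, rename Sum.inl g * rename Sum.inr (f k) ^ m ∈ singularIncidenceIdeal f := by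
  by_contra! hnot
  let S : Submonoid (MvPolynomial (ι ⊕ σ) K) :=
    (nonZeroDivisors (MvPolynomial ι K)).map (rename (R := K) Sum.inl) ⊔
      Submonoid.powers (rename Sum.inr (f k))
  have hdisj : Disjoint (singularIncidenceIdeal f : Set (MvPolynomial (ι ⊕ σ) K)) S := by
    refine Set.disjoint_left.2 fun h hh hS ↦ ?_
    obtain ⟨_, ⟨g, hg, rfl⟩, _, ⟨m, rfl⟩, rfl⟩ := Submonoid.mem_sup.1 hS
    exact hnot g (nonZeroDivisors.ne_zero hg) m hh
  obtain ⟨𝔭, h𝔭, hle, h𝔭S⟩ := Ideal.exists_le_prime_disjoint _ S hdisj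
  refine Set.disjoint_left.1 h𝔭S
    (rename_inr_mem_of_singularIncidenceIdeal_le hle (fun g hg ↦ ?_) k)
    (Submonoid.mem_sup_right (Submonoid.mem_powers _))
  by_contra hg0
  exact Set.disjoint_left.1 h𝔭S hg (Submonoid.mem_sup_left
    (Submonoid.mem_map_of_mem _ (mem_nonZeroDivisors_of_ne_zero hg0)))

theorem stmt11_general (f : ι → MvPolynomial σ K) :
    ∃ g : MvPolynomial ι K, g ≠ 0 ∧
      ∀ a : ι → K, eval a g ≠ 0 →
        ∀ z : σ → K, eval z (∑ i, C (a i) * f i) = 0 →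
          (∀ j, eval z (pderiv j (∑ i, C (a i) * f i)) = 0) → ∀ k, eval z (f k) = 0 := by
  choose g hg0 m hmem using exists_rename_inl_mul_pow_mem_singularIncidenceIdeal f
  refine ⟨∏ k, g k, Finset.prod_ne_zero_iff.2 fun k _ ↦ hg0 k, fun a ha z hzero hpderiv k ↦ ?_⟩
  have hker : singularIncidenceIdeal f ≤ RingHom.ker (aeval (R := K) (Sum.elim a z)) :=
    singularIncidenceIdeal_le_ker_aeval_iff.2
      ⟨by simpa [aeval_eq_eval] using hzero, by simpa [aeval_eq_eval] using hpderiv⟩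
  have hgk : eval a (g k) ≠ 0 := by
    rw [map_prod, Finset.prod_ne_zero_iff] at ha
    exact ha k (Finset.mem_univ k)
  have hmul : eval a (g k) * eval z (f k) ^ m k = 0 := by
    simpa [-aeval_eq_eval, aeval_rename, ← aeval_eq_eval] using hker (hmem k)
  exact eq_zero_of_pow_eq_zero ((mul_eq_zero.1 hmul).resolve_left hgk)

end LinearSystem

theorem stmt11 (n N : ℕ) (hN : 1 ≤ N) (I : Fin N → Fin (n + 1) → ℕ)
    (hI : Function.Injective I) :
    ∃ g : MvPolynomial (Fin N) ℂ, g ≠ 0 ∧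
      ∀ a : Fin N → ℂ, (∀ i, a i ≠ 0) → MvPolynomial.eval a g ≠ 0 →
        ¬ ∃ z : Fin (n + 1) → ℂ, (∀ j, z j ≠ 0) ∧
          MvPolynomial.eval z
            (∑ i, MvPolynomial.C (a i) * ∏ j, MvPolynomial.X j ^ I i j) = 0 ∧
          ∀ j, MvPolynomial.eval z
            (MvPolynomial.pderiv j
              (∑ i, MvPolynomial.C (a i) * ∏ j', MvPolynomial.X j' ^ I i j')) = 0 := by
  obtain ⟨g, hg0, hg⟩ := stmt11_general fun i ↦ ∏ j, (X j : MvPolynomial (Fin (n + 1)) ℂ) ^ I i j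
  refine ⟨g, hg0, fun a _ hga ⟨z, hz, hzero, hpderiv⟩ ↦ ?_⟩
  have hmonomial := hg a hga z hzero hpderiv ⟨0, hN⟩
  simp [Finset.prod_eq_zero_iff, hz] at hmonomial
end
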